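/- Let H be a complex Hilbert space and T a bounded operator on H. Then for every n ≥ 0 the spectrum of the restriction T^{⊙n} of T^{⊗n} to the symmetric subspace H^{⊙n} coincides with the spectrum of T^{⊗n}, that is, σ(T^{⊙n}) = σ(T^{⊗n}) = { Π_{j=1}^n λ_j : λ_j ∈ σ(T) }. -/

import Mathlib

open scoped InnerProductSpace

/-- An abstract presentation of the `n`-fold Hilbert tensor power of `H`:
a Hilbert space `Hn` together with a map `emb` sending `(x 1, …, x n)` to the
elementary tensor `x 1 ⊗ ⋯ ⊗ x n`, such that inner products of elementary
tensors multiply and the elementary tensors span a dense subspace. -/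
structure TensorPowerStructure (H Hn : Type*) [NormedAddCommGroup H]
    [InnerProductSpace ℂ H] [NormedAddCommGroup Hn] [InnerProductSpace ℂ Hn]
    (n : ℕ) where
  emb : (Fin n → H) → Hn
  inner_emb : ∀ x y : Fin n → H, ⟪emb x, emb y⟫_ℂ = ∏ i, ⟪x i, y i⟫_ℂ
  dense_span : Dense ((Submodule.span ℂ (Set.range emb) : Submodule ℂ Hn) : Set Hn)

/-- `Tn` is the `n`-fold tensor power `T^{⊗n}` of `T`, acting as `T` on each
factor of elementary tensors. -/
def IsTensorPowerOp {H Hn : Type*} [NormedAddCommGroup H] [InnerProductSpace ℂ H]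
    [NormedAddCommGroup Hn] [InnerProductSpace ℂ Hn] {n : ℕ}
    (tp : TensorPowerStructure H Hn n) (T : H →L[ℂ] H) (Tn : Hn →L[ℂ] Hn) : Prop :=
  ∀ x : Fin n → H, Tn (tp.emb x) = tp.emb fun i => T (x i)

/-- The symmetric subspace `H^{⊙n}` of the Hilbert tensor power `H^{⊗n}`: the
closed subspace spanned by the symmetric tensors `Σ_{σ ∈ Sₙ} x_{σ(1)} ⊗ ⋯ ⊗ x_{σ(n)}`. -/
def symSubspace {H Hn : Type*} [NormedAddCommGroup H] [InnerProductSpace ℂ H]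
    [NormedAddCommGroup Hn] [InnerProductSpace ℂ Hn] {n : ℕ}
    (tp : TensorPowerStructure H Hn n) : Submodule ℂ Hn :=
  (Submodule.span ℂ
    {y : Hn | ∃ x : Fin n → H,
      y = ∑ σ : Equiv.Perm (Fin n), tp.emb (x ∘ σ)}).topologicalClosure

section gelfand
variable {A : Type*} [NormedRing A] [NormedAlgebra ℂ A] [CompleteSpace A]

theorem spectrum_commProd {n : ℕ} (a : Fin n → A) (hc : ∀ i j, a i * a j = a j * a i)
    {z : ℂ} (hz : z ∈ spectrum ℂ ((List.finRange n).map a).prod) :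
    ∃ l : Fin n → ℂ, (∀ j, l j ∈ spectrum ℂ (a j)) ∧ z = ∏ j, l j := by
  classical
  let S : Set A := Set.range a
  let B : Subalgebra ℂ A := Subalgebra.centralizer ℂ (Set.centralizer S)
  have hBc : IsClosed (B : Set A) := by
    have : (B : Set A) = Set.centralizer (Set.centralizer S) := rfl
    rw [this]
    exact Set.isClosed_centralizer _
  have hS : ∀ i, a i ∈ B := fun i => Set.subset_centralizer_centralizer ⟨i, rfl⟩
  have hcomm : ∀ x y : B, x * y = y * x := by
    intro x y
    apply Subtype.ext
    exact Set.centralizer_centralizer_comm_of_comm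
      (by rintro _ ⟨i, rfl⟩ _ ⟨j, rfl⟩; exact hc i j) _ x.2 _ y.2
  let _ : NormedCommRing B := { (inferInstance : NormedRing B) with mul_comm := hcomm }
  have : CompleteSpace B := hBc.completeSpace_coe
  have hunit : ∀ x : B, IsUnit (x : A) → IsUnit x := by
    intro x hx
    obtain ⟨u, hu⟩ := hx
    have hmem : (↑u⁻¹ : A) ∈ B := by
      have hx2 : ∀ c ∈ Set.centralizer S, c * (x : A) = x * c := x.2
      intro c hc
      have h1 := hx2 c hc
      rw [← hu] at h1
      have : Commute c (u : A) := h1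
      exact (this.units_inv_right).eq
    refine ⟨⟨x, ⟨_, hmem⟩, ?_, ?_⟩, rfl⟩
    · apply Subtype.ext; change (x : A) * ↑u⁻¹ = 1; rw [← hu]; simp
    · apply Subtype.ext; change ↑u⁻¹ * (x : A) = 1; rw [← hu]; simp
  let b : Fin n → B := fun i => ⟨a i, hS i⟩
  have hprod : ((((List.finRange n).map b).prod : B) : A) = ((List.finRange n).map a).prod := by
    have := map_list_prod B.val ((List.finRange n).map b)
    rw [List.map_map] at this
    exact this
  have hz' : z ∈ spectrum ℂ ((List.finRange n).map b).prod := by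
    rw [spectrum.mem_iff] at hz ⊢
    intro h
    apply hz
    have := h.map B.val
    rw [map_sub] at this
    change IsUnit (algebraMap ℂ A z - ((((List.finRange n).map b).prod : B) : A)) at this
    rwa [hprod] at this
  obtain ⟨f, hf⟩ := WeakDual.CharacterSpace.mem_spectrum_iff_exists.1 hz'
  refine ⟨fun j => f (b j), fun j => ?_, ?_⟩
  · have h1 : f (b j) ∈ spectrum ℂ (b j) := AlgHom.apply_mem_spectrum f (b j)
    rw [spectrum.mem_iff] at h1 ⊢
    intro h
    exact h1 (hunit _ h)
  · rw [← hf, map_list_prod, List.map_map, ← List.ofFn_eq_map, List.prod_ofFn]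
    rfl
end gelfand

section tensor
variable {H Hn : Type*} [NormedAddCommGroup H] [InnerProductSpace ℂ H]
    [NormedAddCommGroup Hn] [InnerProductSpace ℂ Hn] {n : ℕ}

theorem tp_ext (tp : TensorPowerStructure H Hn n) {u v : Hn}
    (h : ∀ y, ⟪tp.emb y, u⟫_ℂ = ⟪tp.emb y, v⟫_ℂ) : u = v := by
  rw [← sub_eq_zero]
  have key : ∀ w ∈ Submodule.span ℂ (Set.range tp.emb), ⟪w, u - v⟫_ℂ = 0 := by
    intro w hw
    induction hw using Submodule.span_induction with
    | mem x hx => obtain ⟨y, rfl⟩ := hx; rw [inner_sub_right, h, sub_self]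
    | zero => simp
    | add x y _ _ hx hy => rw [inner_add_left, hx, hy, add_zero]
    | smul c x _ hx => rw [inner_smul_left, hx, mul_zero]
  exact tp.dense_span.eq_zero_of_inner_right ℂ fun w hw => key w hw

theorem tp_op_ext (tp : TensorPowerStructure H Hn n) {A B : Hn →L[ℂ] Hn}
    (h : ∀ x, A (tp.emb x) = B (tp.emb x)) : A = B := by
  apply ContinuousLinearMap.ext_on tp.dense_span
  rintro _ ⟨x, rfl⟩
  exact h x

theorem tp_update_add [DecidableEq (Fin n)] (tp : TensorPowerStructure H Hn n) (x : Fin n → H) (j : Fin n) (u v : H) :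
    tp.emb (Function.update x j (u + v)) =
      tp.emb (Function.update x j u) + tp.emb (Function.update x j v) := by
  apply tp_ext tp
  intro y
  rw [inner_add_right]
  simp only [tp.inner_emb, ← Finset.mul_prod_erase Finset.univ _ (Finset.mem_univ j),
    Function.update_self]
  have : ∀ w, ∏ i ∈ Finset.univ.erase j, ⟪y i, Function.update x j w i⟫_ℂ
      = ∏ i ∈ Finset.univ.erase j, ⟪y i, x i⟫_ℂ := fun w =>
    Finset.prod_congr rfl fun i hi => by rw [Function.update_of_ne (Finset.ne_of_mem_erase hi)]
  simp only [this, inner_add_right]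
  ring

theorem tp_update_smul [DecidableEq (Fin n)] (tp : TensorPowerStructure H Hn n) (x : Fin n → H) (j : Fin n) (c : ℂ) (v : H) :
    tp.emb (Function.update x j (c • v)) = c • tp.emb (Function.update x j v) := by
  apply tp_ext tp
  intro y
  rw [inner_smul_right]
  simp only [tp.inner_emb, ← Finset.mul_prod_erase Finset.univ _ (Finset.mem_univ j),
    Function.update_self]
  have : ∀ w, ∏ i ∈ Finset.univ.erase j, ⟪y i, Function.update x j w i⟫_ℂ
      = ∏ i ∈ Finset.univ.erase j, ⟪y i, x i⟫_ℂ := fun w =>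
    Finset.prod_congr rfl fun i hi => by rw [Function.update_of_ne (Finset.ne_of_mem_erase hi)]
  simp only [this, inner_smul_right]
  ring

theorem tp_smul (tp : TensorPowerStructure H Hn n) (x : Fin n → H) (l : Fin n → ℂ) :
    tp.emb (fun i => l i • x i) = (∏ i, l i) • tp.emb x := by
  apply tp_ext tp
  intro y
  rw [inner_smul_right]
  simp only [tp.inner_emb, inner_smul_right, Finset.prod_mul_distrib]

theorem tp_exists_isometry [CompleteSpace Hn] (tp : TensorPowerStructure H Hn n)
    (g : (Fin n → H) → (Fin n → H))
    (hg : ∀ x y, ∏ i, ⟪g x i, g y i⟫_ℂ = ∏ i, ⟪x i, y i⟫_ℂ) :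
    ∃ B : Hn →L[ℂ] Hn, ∀ x, B (tp.emb x) = tp.emb (g x) := by
  let e := Finsupp.linearCombination ℂ tp.emb
  let f := Finsupp.linearCombination ℂ (fun x => tp.emb (g x))
  have hd : DenseRange e := by
    have := tp.dense_span
    rw [← Finsupp.range_linearCombination] at this
    exact this
  have hinner : ∀ c, ⟪f c, f c⟫_ℂ = ⟪e c, e c⟫_ℂ := by
    intro c
    simp only [e, f, Finsupp.linearCombination_apply, Finsupp.sum, sum_inner, inner_sum,
      inner_smul_left, inner_smul_right, tp.inner_emb, hg]
  have hn : ∀ c, ‖f c‖ ≤ 1 * ‖e c‖ := by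
    intro c
    rw [one_mul, @norm_eq_sqrt_re_inner ℂ, @norm_eq_sqrt_re_inner ℂ _ _ _ _ (e c), hinner]
  refine ⟨f.extendOfNorm e, fun x => ?_⟩
  have := LinearMap.extendOfNorm_eq hd ⟨1, hn⟩ (Finsupp.single x 1)
  simpa [e, f] using this

theorem tp_exists_leg [CompleteSpace H] [CompleteSpace Hn] (tp : TensorPowerStructure H Hn n)
    (j : Fin n) (A : H →L[ℂ] H) :
    ∃ B : Hn →L[ℂ] Hn, ∀ x, B (tp.emb x) = tp.emb (Function.update x j (A (x j))) := by
  have hA : A ∈ Submodule.span ℂ (unitary (H →L[ℂ] H) : Set (H →L[ℂ] H)) := by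
    rw [CStarAlgebra.span_unitary]; trivial
  induction hA using Submodule.span_induction with
  | mem U hU =>
    apply tp_exists_isometry tp (fun x => Function.update x j (U (x j)))
    intro x y
    apply Finset.prod_congr rfl
    intro i _
    by_cases h : i = j
    · subst h
      simp only [Function.update_self]
      exact ContinuousLinearMap.inner_map_map_of_mem_unitary hU _ _
    · simp [Function.update_of_ne h]
  | zero =>
    refine ⟨0, fun x => ?_⟩
    have := tp_update_smul tp x j 0 0
    simpa using this.symm
  | add U V _ _ hU hV =>
    obtain ⟨B, hB⟩ := hU
    obtain ⟨C, hC⟩ := hV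
    exact ⟨B + C, fun x => by simp [tp_update_add, hB, hC]⟩
  | smul c U _ hU =>
    obtain ⟨B, hB⟩ := hU
    exact ⟨c • B, fun x => by simp [tp_update_smul, hB]⟩

theorem tp_exists_legHom [CompleteSpace H] [CompleteSpace Hn] (tp : TensorPowerStructure H Hn n)
    (j : Fin n) :
    ∃ Φ : (H →L[ℂ] H) →ₐ[ℂ] (Hn →L[ℂ] Hn),
      ∀ A x, Φ A (tp.emb x) = tp.emb (Function.update x j (A (x j))) := by
  choose Φ hΦ using tp_exists_leg tp j
  refine ⟨AlgHom.ofLinearMap ⟨⟨Φ, ?_⟩, ?_⟩ ?_ ?_, hΦ⟩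
  · intro A B
    exact tp_op_ext tp fun x => by simp [hΦ, tp_update_add]
  · intro c B
    exact tp_op_ext tp fun x => by simp [hΦ, tp_update_smul]
  · exact tp_op_ext tp fun x => by simp [hΦ]
  · intro A B
    exact tp_op_ext tp fun x => by simp [hΦ]

theorem tp_spectrum_subset [CompleteSpace H] [CompleteSpace Hn] (tp : TensorPowerStructure H Hn n)
    (T : H →L[ℂ] H) (Tn : Hn →L[ℂ] Hn) (hTn : IsTensorPowerOp tp T Tn) {z : ℂ}
    (hz : z ∈ spectrum ℂ Tn) :
    ∃ l : Fin n → ℂ, (∀ j, l j ∈ spectrum ℂ T) ∧ z = ∏ j, l j := by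
  choose Φ hΦ using tp_exists_legHom tp
  have hprod : Tn = ((List.finRange n).map fun j => Φ j T).prod := by
    apply tp_op_ext tp
    have key : ∀ L : List (Fin n), L.Nodup → ∀ x, (L.map fun j => Φ j T).prod (tp.emb x)
        = tp.emb (fun i => if i ∈ L then T (x i) else x i) := by
      intro L
      induction L with
      | nil => intro _ x; simp
      | cons j L ih =>
        intro hL x
        rw [List.nodup_cons] at hL
        rw [List.map_cons, List.prod_cons, mul_apply_eq_comp, ih hL.2, hΦ]
        congr 1
        ext i
        by_cases h : i = j
        · subst h; simp [hL.1]
        · simp [h]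
    intro x
    rw [key _ (List.nodup_finRange n), hTn]
    simp
  rw [hprod] at hz
  obtain ⟨l, hl, h⟩ := spectrum_commProd (fun j => Φ j T) (by
    intro i j
    by_cases h : i = j
    · rw [h]
    · apply tp_op_ext tp
      intro x
      simp only [mul_apply_eq_comp, hΦ]
      rw [Function.update_of_ne h, Function.update_of_ne (Ne.symm h), Function.update_comm h]) hz
  exact ⟨l, fun j => AlgHom.spectrum_apply_subset (Φ j) T (hl j), h⟩
end tensor

section ap
open Filter Topology
variable {H : Type*} [NormedAddCommGroup H] [InnerProductSpace ℂ H]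

def IsApprox (T : H →L[ℂ] H) (l : ℂ) : Prop :=
  ∃ x : ℕ → H, (∀ k, ‖x k‖ = 1) ∧ Tendsto (fun k => T (x k) - l • x k) atTop (𝓝 0)

theorem bddBelow_of_not_approx {T : H →L[ℂ] H} {l : ℂ} (h : ¬ IsApprox T l) :
    ∃ c > 0, ∀ x, c * ‖x‖ ≤ ‖T x - l • x‖ := by
  by_contra! hc
  apply h
  choose x hx using fun k : ℕ => hc (1 / ((k : ℝ) + 1)) (by positivity)
  have hx0 : ∀ k, 0 < ‖x k‖ := by
    intro k
    by_contra! h0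
    have h1 := hx k
    have : ‖x k‖ = 0 := le_antisymm h0 (norm_nonneg _)
    rw [norm_eq_zero] at this
    simp [this] at h1
  refine ⟨fun k => ((‖x k‖⁻¹ : ℝ) : ℂ) • x k, fun k => ?_, ?_⟩
  · rw [norm_smul, Complex.norm_real, norm_inv, norm_norm, inv_mul_cancel₀ (hx0 k).ne']
  · refine squeeze_zero_norm (fun k => ?_) tendsto_one_div_add_atTop_nhds_zero_nat
    rw [map_smul, smul_comm, ← smul_sub, norm_smul, Complex.norm_real, norm_inv, norm_norm,
      inv_mul_le_iff₀ (hx0 k), mul_comm]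
    exact (hx k).le

variable [CompleteSpace H]

theorem approx_of_boundary {T : H →L[ℂ] H} {l : ℂ} (hl : l ∈ spectrum ℂ T)
    (hb : ∀ ε > 0, ∃ z ∉ spectrum ℂ T, ‖z - l‖ < ε) : IsApprox T l := by
  by_contra h
  obtain ⟨c, hc, hx⟩ := bddBelow_of_not_approx h
  obtain ⟨z, hz, hzl⟩ := hb (c / 2) (by positivity)
  rw [spectrum.notMem_iff] at hz
  rw [spectrum.mem_iff] at hl
  apply hl
  obtain ⟨u, hu⟩ := hz
  have hR : ‖(↑u⁻¹ : H →L[ℂ] H)‖ ≤ 2 / c := by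
    apply ContinuousLinearMap.opNorm_le_bound _ (by positivity)
    intro y
    set w := (↑u⁻¹ : H →L[ℂ] H) y with hw
    have h1 : (u : H →L[ℂ] H) w = y := by
      rw [hw, ← mul_apply_eq_comp, Units.mul_inv]; rfl
    rw [hu] at h1
    have h2 : y = z • w - T w := by
      rw [← h1]; simp [Algebra.algebraMap_eq_smul_one]
    have h3 := hx w
    have h4 : T w - l • w = (z - l) • w - y := by rw [h2, sub_smul]; abel
    rw [h4] at h3
    have h5 := norm_sub_le ((z - l) • w) y
    rw [norm_smul] at h5
    have h6 := mul_le_mul_of_nonneg_right hzl.le (norm_nonneg w)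
    rw [div_mul_eq_mul_div, le_div_iff₀ hc]
    linarith
  rcases subsingleton_or_nontrivial H with hH | hH
  · exact isUnit_of_subsingleton _
  have hpos : 0 < ‖(↑u⁻¹ : H →L[ℂ] H)‖ := Units.norm_pos u⁻¹
  refine ⟨u.ofNearby (algebraMap ℂ _ l - T) ?_, rfl⟩
  rw [hu]
  have : algebraMap ℂ (H →L[ℂ] H) l - T - (algebraMap ℂ (H →L[ℂ] H) z - T) =
    algebraMap ℂ (H →L[ℂ] H) (l - z) := by rw [map_sub]; abel
  rw [this, norm_algebraMap', norm_sub_rev]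
  refine hzl.trans_le ?_
  rw [le_inv_comm₀ (by positivity) hpos]
  simpa using hR

theorem approx_adjoint_of_not_approx {T : H →L[ℂ] H} {l : ℂ} (hl : l ∈ spectrum ℂ T)
    (h : ¬ IsApprox T l) : IsApprox (ContinuousLinearMap.adjoint T) (star l) := by
  obtain ⟨c, hc, hx⟩ := bddBelow_of_not_approx h
  by_contra h'
  obtain ⟨d, hd, hy⟩ := bddBelow_of_not_approx h'
  rw [spectrum.mem_iff] at hl
  apply hl
  set S := algebraMap ℂ (H →L[ℂ] H) l - T with hS
  have hSx : ∀ x, S x = l • x - T x := by intro x; simp [hS, Algebra.algebraMap_eq_smul_one]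
  rw [ContinuousLinearMap.isUnit_iff_bijective,
    ContinuousLinearMap.bijective_iff_dense_range_and_antilipschitz]
  constructor
  · rw [Submodule.topologicalClosure_eq_top_iff, Submodule.eq_bot_iff]
    intro y hyo
    have h0 : ContinuousLinearMap.adjoint T y - star l • y = 0 := by
      apply ext_inner_right ℂ
      intro w
      have := (Submodule.mem_orthogonal' _ _).1 hyo (S w) ⟨w, rfl⟩
      rw [hSx, inner_sub_right, inner_smul_right] at this
      rw [inner_sub_left, ContinuousLinearMap.adjoint_inner_left, inner_smul_left, inner_zero_left]
      simp only [RCLike.star_def, RCLike.conj_conj]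
      linear_combination -this
    have := hy y
    rw [h0, norm_zero] at this
    have h2 : ‖y‖ ≤ 0 := by
      by_contra! h3
      nlinarith [mul_pos hd h3]
    simpa using h2
  · refine ⟨⟨c⁻¹, by positivity⟩, ?_⟩
    apply ContinuousLinearMap.antilipschitz_of_bound
    intro x
    rw [hSx, norm_sub_rev]
    change ‖x‖ ≤ c⁻¹ * _
    rw [inv_mul_eq_div, le_div_iff₀ hc, mul_comm]
    exact hx x

theorem star_mem_spectrum_adjoint {K : Type*} [NormedAddCommGroup K] [InnerProductSpace ℂ K]
    [CompleteSpace K] {T : K →L[ℂ] K} {l : ℂ} :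
    star l ∈ spectrum ℂ (ContinuousLinearMap.adjoint T) ↔ l ∈ spectrum ℂ T := by
  rw [← ContinuousLinearMap.star_eq_adjoint, spectrum.map_star, Set.star_mem_star]

theorem exists_good_tuple {n : ℕ} (T : H →L[ℂ] H) (l : Fin n → ℂ)
    (hl : ∀ j, l j ∈ spectrum ℂ T) :
    ∃ m : Fin n → ℂ, ∏ j, m j = ∏ j, l j ∧ ((∀ j, IsApprox T (m j)) ∨
      ∀ j, IsApprox (ContinuousLinearMap.adjoint T) (star (m j))) := by
  classical
  by_cases hz : ∏ j, l j = 0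
  · obtain ⟨i, hi, hi0⟩ := Finset.prod_eq_zero_iff.1 hz
    refine ⟨fun _ => 0, ?_, ?_⟩
    · rw [hz]; exact Finset.prod_eq_zero hi rfl
    · have h0 := hl i
      rw [hi0] at h0
      by_cases h : IsApprox T 0
      · exact Or.inl fun _ => h
      · exact Or.inr fun _ => approx_adjoint_of_not_approx h0 h
  let K : Set (Fin n → ℂ) := (Set.univ.pi fun _ => spectrum ℂ T) ∩ {m | ∏ j, m j = ∏ j, l j}
  have hK : IsCompact K := by
    apply IsCompact.inter_right
    · exact isCompact_univ_pi fun _ => spectrum.isCompact T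
    · exact isClosed_eq (by fun_prop) continuous_const
  obtain ⟨m, hmK, hmax⟩ := hK.exists_isMaxOn ⟨l, fun j _ => hl j, rfl⟩
    (f := fun m => ∑ j, ‖m j‖ ^ 2) (by fun_prop)
  have hm : ∀ j, m j ∈ spectrum ℂ T := fun j => hmK.1 j trivial
  have hmp : ∏ j, m j = ∏ j, l j := hmK.2
  have hm0 : ∀ j, m j ≠ 0 := by
    intro j h
    apply hz
    rw [← hmp]
    exact Finset.prod_eq_zero (Finset.mem_univ j) h
  -- key: two distinct indices cannot both be interior
  have key : ∀ i j, i ≠ j → spectrum ℂ T ∈ 𝓝 (m i) → ¬ spectrum ℂ T ∈ 𝓝 (m j) := by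
    have aux : ∀ i j, i ≠ j → spectrum ℂ T ∈ 𝓝 (m i) → spectrum ℂ T ∈ 𝓝 (m j) →
        ∀ᶠ t : ℝ in 𝓝[>] 1, ‖m i‖ ^ 2 * t ^ 2 + ‖m j‖ ^ 2 * (t⁻¹) ^ 2 ≤
          ‖m i‖ ^ 2 + ‖m j‖ ^ 2 := by
      intro i j hij hi hj
      have c1 : Tendsto (fun t : ℝ => m i * (t : ℂ)) (𝓝[>] 1) (𝓝 (m i)) := by
        have : ContinuousAt (fun t : ℝ => m i * (t : ℂ)) 1 := by fun_prop
        have := this.tendsto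
        simp only [Complex.ofReal_one, mul_one] at this
        exact this.mono_left nhdsWithin_le_nhds
      have c2 : Tendsto (fun t : ℝ => m j * ((t⁻¹ : ℝ) : ℂ)) (𝓝[>] 1) (𝓝 (m j)) := by
        have : ContinuousAt (fun t : ℝ => m j * ((t⁻¹ : ℝ) : ℂ)) 1 := by
          have : ContinuousAt (fun t : ℝ => t⁻¹) 1 := continuousAt_inv₀ one_ne_zero
          fun_prop
        have := this.tendsto
        simp only [inv_one, Complex.ofReal_one, mul_one] at this
        exact this.mono_left nhdsWithin_le_nhds
      filter_upwards [c1 hi, c2 hj, self_mem_nhdsWithin] with t h1 h2 ht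
      have ht : (1 : ℝ) < t := ht
      have ht0 : t ≠ 0 := by linarith
      let m' := Function.update (Function.update m i (m i * (t : ℂ))) j (m j * ((t⁻¹ : ℝ) : ℂ))
      have hmi : m' i = m i * t := by simp [m', hij]
      have hmj : m' j = m j * ((t⁻¹ : ℝ) : ℂ) := by simp [m']
      have hmk : ∀ k ∈ (Finset.univ.erase i).erase j, m' k = m k := by
        intro k hk
        simp only [Finset.mem_erase] at hk
        simp [m', hk.1, hk.2.1]
      have hjm : j ∈ Finset.univ.erase i := by simp [Ne.symm hij]
      have hm'K : m' ∈ K := by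
        constructor
        · intro k _
          by_cases hkj : k = j
          · rw [hkj, hmj]; exact h2
          by_cases hki : k = i
          · rw [hki, hmi]; exact h1
          rw [hmk k (by simp [hkj, hki])]
          exact hm k
        · change ∏ k, m' k = _
          rw [← hmp, ← Finset.mul_prod_erase _ m' (Finset.mem_univ i),
            ← Finset.mul_prod_erase _ m (Finset.mem_univ i),
            ← Finset.mul_prod_erase _ m' hjm, ← Finset.mul_prod_erase _ m hjm,
            Finset.prod_congr rfl hmk, hmi, hmj]
          have : (t : ℂ) ≠ 0 := by exact_mod_cast ht0
          push_cast
          field_simp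
      have hle : ∑ k, ‖m' k‖ ^ 2 ≤ ∑ k, ‖m k‖ ^ 2 := hmax hm'K
      rw [← Finset.add_sum_erase _ (fun k => ‖m' k‖ ^ 2) (Finset.mem_univ i),
            ← Finset.add_sum_erase _ (fun k => ‖m k‖ ^ 2) (Finset.mem_univ i),
            ← Finset.add_sum_erase _ (fun k => ‖m' k‖ ^ 2) hjm,
            ← Finset.add_sum_erase _ (fun k => ‖m k‖ ^ 2) hjm,
            Finset.sum_congr rfl (fun k hk => by rw [hmk k hk])] at hle
      simp only [hmi, hmj, norm_mul, Complex.norm_real, mul_pow, Real.norm_eq_abs, sq_abs] at hle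
      linarith
    intro i j hij hi hj
    obtain ⟨t, ⟨h1, h2⟩, ht⟩ := (((aux i j hij hi hj).and (aux j i hij.symm hj hi)).and
      self_mem_nhdsWithin).exists
    have ht : (1 : ℝ) < t := ht
    have hp : 0 < ‖m i‖ ^ 2 := by have := norm_pos_iff.2 (hm0 i); positivity
    have hq : 0 < ‖m j‖ ^ 2 := by have := norm_pos_iff.2 (hm0 j); positivity
    have hs : 2 < t ^ 2 + (t⁻¹) ^ 2 := by
      have h3 : t * t⁻¹ = 1 := mul_inv_cancel₀ (by linarith)
      have h4 : t⁻¹ < 1 := inv_lt_one_of_one_lt₀ ht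
      nlinarith [mul_pos (sub_pos.2 (h4.trans ht)) (sub_pos.2 (h4.trans ht))]
    nlinarith [mul_pos hp (sub_pos.2 hs), mul_pos hq (sub_pos.2 hs)]
  have hbd : ∀ j, ¬ spectrum ℂ T ∈ 𝓝 (m j) → ∀ ε > 0, ∃ z ∉ spectrum ℂ T, ‖z - m j‖ < ε := by
    intro j hj ε hε
    by_contra! h
    apply hj
    filter_upwards [Metric.ball_mem_nhds (m j) hε] with z hz
    by_contra hzs
    have := h z hzs
    rw [Metric.mem_ball, dist_eq_norm] at hz
    linarith
  refine ⟨m, hmp, ?_⟩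
  by_cases hall : ∀ j, IsApprox T (m j)
  · exact Or.inl hall
  right
  push Not at hall
  obtain ⟨k, hk⟩ := hall
  have hki : spectrum ℂ T ∈ 𝓝 (m k) := by
    by_contra h
    exact hk (approx_of_boundary (hm k) (hbd k h))
  intro j
  by_cases hjk : j = k
  · subst hjk
    exact approx_adjoint_of_not_approx (hm j) hk
  · apply approx_of_boundary (star_mem_spectrum_adjoint.2 (hm j))
    intro ε hε
    obtain ⟨z, hz, hzj⟩ := hbd j (key k j (Ne.symm hjk) hki) ε hε
    refine ⟨star z, fun h => hz (star_mem_spectrum_adjoint.1 h), ?_⟩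
    rw [← star_sub, norm_star]
    exact hzj
end ap

section sym
open Filter Topology
variable {H Hn : Type*} [NormedAddCommGroup H] [InnerProductSpace ℂ H]
    [NormedAddCommGroup Hn] [InnerProductSpace ℂ Hn] {n : ℕ}

theorem exists_common_vector (m : ℕ) :
    ∃ δ : ℝ, 0 < δ ∧ δ ≤ 1 ∧ ∃ C : ℝ, 0 ≤ C ∧ ∀ x : Fin m → H, (∀ i, ‖x i‖ = 1) →
      ∃ y : H, ‖y‖ ≤ C ∧ ∀ i, δ ≤ ‖⟪y, x i⟫_ℂ‖ := by
  induction m with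
  | zero => exact ⟨1, one_pos, le_rfl, 0, le_rfl, fun x _ => ⟨0, by simp, fun i => i.elim0⟩⟩
  | succ m ih =>
    obtain ⟨δ, hδ, hδ1, C, hC, h⟩ := ih
    refine ⟨δ / 4, by positivity, by linarith, C + 1, by positivity, fun x hx => ?_⟩
    obtain ⟨y, hy, hyx⟩ := h (fun i => x i.succ) (fun i => hx _)
    by_cases h0 : δ / 4 ≤ ‖⟪y, x 0⟫_ℂ‖
    · refine ⟨y, by linarith, fun i => ?_⟩
      refine Fin.cases h0 (fun i => ?_) i
      have := hyx i
      linarith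
    · push Not at h0
      have hn2 : ‖((δ / 2 : ℝ) : ℂ)‖ = δ / 2 := by
        rw [Complex.norm_real, Real.norm_of_nonneg (by positivity)]
      have hin : ∀ w, ⟪y + ((δ / 2 : ℝ) : ℂ) • x 0, w⟫_ℂ
          = ⟪y, w⟫_ℂ + ((δ / 2 : ℝ) : ℂ) * ⟪x 0, w⟫_ℂ := by
        intro w
        rw [inner_add_left, inner_smul_left, Complex.conj_ofReal]
      refine ⟨y + ((δ / 2 : ℝ) : ℂ) • x 0, ?_, fun i => ?_⟩
      · refine (norm_add_le _ _).trans ?_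
        rw [norm_smul, hn2, hx]
        linarith
      · rw [hin]
        refine Fin.cases ?_ (fun i => ?_) i
        · have h1 : ⟪x 0, x 0⟫_ℂ = 1 := by
            rw [inner_self_eq_norm_sq_to_K, hx]; simp
          rw [h1, mul_one, add_comm]
          have := norm_sub_le_norm_add ((δ / 2 : ℝ) : ℂ) ⟪y, x 0⟫_ℂ
          rw [hn2] at this
          linarith
        · have h1 := norm_inner_le_norm (𝕜 := ℂ) (x 0) (x i.succ)
          rw [hx, hx, mul_one] at h1
          have h2 := norm_sub_le_norm_add ⟪y, x i.succ⟫_ℂ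
            (((δ / 2 : ℝ) : ℂ) * ⟪x 0, x i.succ⟫_ℂ)
          rw [norm_mul, hn2] at h2
          have h3 := hyx i
          have h4 := mul_le_mul_of_nonneg_left h1 (by positivity : 0 ≤ δ / 2)
          linarith

theorem tp_norm_emb (tp : TensorPowerStructure H Hn n) (x : Fin n → H) :
    ‖tp.emb x‖ = ∏ i, ‖x i‖ := by
  have h : ⟪tp.emb x, tp.emb x⟫_ℂ = ∏ i, ⟪x i, x i⟫_ℂ := tp.inner_emb x x
  simp only [inner_self_eq_norm_sq_to_K] at h
  rw [Finset.prod_pow] at h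
  have h' : ‖tp.emb x‖ ^ 2 = (∏ i, ‖x i‖) ^ 2 := by exact_mod_cast h
  exact (sq_eq_sq₀ (norm_nonneg _) (Finset.prod_nonneg fun i _ => norm_nonneg _)).1 h'

def symVec (tp : TensorPowerStructure H Hn n) (x : Fin n → H) : Hn :=
  ∑ σ : Equiv.Perm (Fin n), tp.emb (x ∘ σ)

theorem symVec_mem (tp : TensorPowerStructure H Hn n) (x : Fin n → H) :
    symVec tp x ∈ symSubspace tp :=
  Submodule.le_topologicalClosure _ (Submodule.subset_span ⟨x, rfl⟩)

theorem symVec_lower (tp : TensorPowerStructure H Hn n) :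
    ∃ c : ℝ, 0 < c ∧ ∀ x : Fin n → H, (∀ i, ‖x i‖ = 1) → c ≤ ‖symVec tp x‖ := by
  obtain ⟨δ, hδ, -, C, hC, h⟩ := exists_common_vector (H := H) n
  refine ⟨δ ^ n / (C + 1) ^ n, by positivity, fun x hx => ?_⟩
  obtain ⟨y, hy, hyx⟩ := h x hx
  have h1 : ⟪tp.emb (fun _ => y), symVec tp x⟫_ℂ
      = (Fintype.card (Equiv.Perm (Fin n)) : ℂ) * ∏ i, ⟪y, x i⟫_ℂ := by
    simp only [symVec, inner_sum, tp.inner_emb, Function.comp]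
    have : ∀ σ : Equiv.Perm (Fin n), ∏ i, ⟪y, x (σ i)⟫_ℂ = ∏ i, ⟪y, x i⟫_ℂ := fun σ =>
      Equiv.prod_comp σ (fun i => ⟪y, x i⟫_ℂ)
    simp only [this, Finset.sum_const, nsmul_eq_mul, Finset.card_univ]
  have h2 : δ ^ n ≤ ‖⟪tp.emb (fun _ => y), symVec tp x⟫_ℂ‖ := by
    rw [h1, norm_mul, norm_prod, Complex.norm_natCast]
    have h3 : δ ^ n ≤ ∏ i, ‖⟪y, x i⟫_ℂ‖ := by
      have := Finset.prod_le_prod (s := Finset.univ) (f := fun _ : Fin n => δ)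
        (g := fun i => ‖⟪y, x i⟫_ℂ‖) (fun _ _ => hδ.le) (fun i _ => hyx i)
      simpa using this
    have h4 : (1 : ℝ) ≤ (Fintype.card (Equiv.Perm (Fin n)) : ℝ) := by
      exact_mod_cast Fintype.card_pos
    have h5 : 0 < δ ^ n := by positivity
    nlinarith
  have h3 := norm_inner_le_norm (𝕜 := ℂ) (tp.emb (fun _ => y)) (symVec tp x)
  have h4 : ‖tp.emb (fun _ => y)‖ ≤ (C + 1) ^ n := by
    rw [tp_norm_emb]
    simp only [Finset.prod_const, Finset.card_univ, Fintype.card_fin]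
    exact pow_le_pow_left₀ (norm_nonneg _) (by linarith) _
  rw [div_le_iff₀ (by positivity), mul_comm]
  exact h2.trans (h3.trans (mul_le_mul_of_nonneg_right h4 (norm_nonneg _)))

theorem tp_tendsto (tp : TensorPowerStructure H Hn n) (a b : ℕ → Fin n → H)
    (M : Fin n → ℝ) (hb : ∀ k i, ‖b k i‖ ≤ M i)
    (hab : ∀ i, Tendsto (fun k => a k i - b k i) atTop (𝓝 0)) 
    (r : Fin n → ℂ) (hr : ∀ k i, ⟪b k i, b k i⟫_ℂ = r i) :
    Tendsto (fun k => tp.emb (a k) - tp.emb (b k)) atTop (𝓝 0) := by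
  -- inner products of the difference with the bounded sequence tend to zero
  have e1 : ∀ i, Tendsto (fun k => ⟪a k i - b k i, b k i⟫_ℂ) atTop (𝓝 0) := by
    intro i
    have h0 : Tendsto (fun k => ‖a k i - b k i‖ * M i) atTop (𝓝 0) := by
      simpa using ((hab i).norm).mul_const (M i)
    refine squeeze_zero_norm (fun k => ?_) h0
    exact (norm_inner_le_norm _ _).trans (mul_le_mul_of_nonneg_left (hb k i) (norm_nonneg _))
  have e2 : ∀ i, Tendsto (fun k => ⟪b k i, a k i - b k i⟫_ℂ) atTop (𝓝 0) := by
    intro i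
    have := (Complex.continuous_conj.tendsto _).comp (e1 i)
    simpa [Function.comp_def] using this
  have e3 : ∀ i, Tendsto (fun k => ⟪a k i - b k i, a k i - b k i⟫_ℂ) atTop (𝓝 0) := by
    intro i
    simpa using (hab i).inner (𝕜 := ℂ) (hab i)
  have f1 : ∀ i, Tendsto (fun k => ⟪a k i, b k i⟫_ℂ) atTop (𝓝 (r i)) := by
    intro i
    have := (e1 i).add_const (r i)
    simp only [zero_add] at this
    refine this.congr fun k => ?_
    rw [← hr k i, ← inner_add_left, sub_add_cancel]
  have f2 : ∀ i, Tendsto (fun k => ⟪b k i, a k i⟫_ℂ) atTop (𝓝 (r i)) := by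
    intro i
    have := (e2 i).add_const (r i)
    simp only [zero_add] at this
    refine this.congr fun k => ?_
    rw [← hr k i, ← inner_add_right, sub_add_cancel]
  have f3 : ∀ i, Tendsto (fun k => ⟪a k i, a k i⟫_ℂ) atTop (𝓝 (r i)) := by
    intro i
    have := ((e3 i).add (f1 i)).add (e2 i)
    simp only [zero_add, add_zero] at this
    refine this.congr fun k => ?_
    simp only [inner_sub_left, inner_sub_right]
    ring
  have g : Tendsto (fun k => ⟪tp.emb (a k) - tp.emb (b k), tp.emb (a k) - tp.emb (b k)⟫_ℂ)
      atTop (𝓝 0) := by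
    have := ((tendsto_finsetProd Finset.univ fun i _ => f3 i).sub
      (tendsto_finsetProd Finset.univ fun i _ => f2 i)).sub
      ((tendsto_finsetProd Finset.univ fun i _ => f1 i).sub_const (∏ i, r i))
    simp only [sub_self] at this
    refine this.congr fun k => ?_
    simp only [inner_sub_left, inner_sub_right, tp.inner_emb, hr]
  rw [tendsto_zero_iff_norm_tendsto_zero]
  have g2 := (Real.continuous_sqrt.tendsto _).comp (((Complex.continuous_re.tendsto _).comp g))
  simp only [Complex.zero_re, Real.sqrt_zero] at g2
  refine g2.congr fun k => ?_
  exact (norm_eq_sqrt_re_inner (𝕜 := ℂ) _).symm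

theorem prod_mem_spectrum_of_approx (tp : TensorPowerStructure H Hn n)
    (T : H →L[ℂ] H) (Tn : Hn →L[ℂ] Hn) (hTn : IsTensorPowerOp tp T Tn)
    (Ts : ↥(symSubspace tp) →L[ℂ] ↥(symSubspace tp))
    (hTs : ∀ x : symSubspace tp, ((Ts x : Hn)) = Tn x)
    (l : Fin n → ℂ) (hl : ∀ j, IsApprox T (l j)) : ∏ j, l j ∈ spectrum ℂ Ts := by
  rw [spectrum.mem_iff]
  rintro ⟨u, hu⟩
  set z := ∏ j, l j with hz
  choose x hx1 hx using hl
  obtain ⟨c, hc, hlow⟩ := symVec_lower tp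
  let v : ℕ → symSubspace tp := fun k => ⟨symVec tp (fun i => x i k), symVec_mem _ _⟩
  have hv : ∀ k, c ≤ ‖v k‖ := fun k => hlow _ (fun i => hx1 i k)
  have hlim : Tendsto (fun k => (u : symSubspace tp →L[ℂ] symSubspace tp) (v k)) atTop (𝓝 0) := by
    rw [tendsto_subtype_rng]
    have hcoe : ∀ k, (((u : symSubspace tp →L[ℂ] symSubspace tp) (v k) : symSubspace tp) : Hn)
        = - ∑ σ : Equiv.Perm (Fin n), (tp.emb (fun i => T (x (σ i) k))
            - tp.emb (fun i => l (σ i) • x (σ i) k)) := by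
      intro k
      rw [hu]
      have : (algebraMap ℂ (symSubspace tp →L[ℂ] symSubspace tp) z - Ts) (v k)
        = z • v k - Ts (v k) := by simp [Algebra.algebraMap_eq_smul_one]
      rw [this, Submodule.coe_sub, Submodule.coe_smul, hTs]
      simp only [v, symVec, map_sum, Finset.smul_sum, ← Finset.sum_sub_distrib,
        ← Finset.sum_neg_distrib]
      refine Finset.sum_congr rfl fun σ _ => ?_
      rw [hTn, tp_smul tp (fun i => x (σ i) k) (fun i => l (σ i)), Equiv.prod_comp σ l, neg_sub]
      rfl
    simp only [hcoe]
    have : Tendsto (fun k => - ∑ σ : Equiv.Perm (Fin n), (tp.emb (fun i => T (x (σ i) k))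
            - tp.emb (fun i => l (σ i) • x (σ i) k))) atTop
            (𝓝 (- ∑ σ : Equiv.Perm (Fin n), (0 : Hn))) := by
      refine (tendsto_finsetSum _ fun σ _ => ?_).neg
      refine tp_tendsto tp (fun k i => T (x (σ i) k)) (fun k i => l (σ i) • x (σ i) k)
        (fun i => ‖l (σ i)‖) ?_ ?_ (fun i => ((‖l (σ i)‖ : ℝ) : ℂ) ^ 2) ?_
      · intro k i
        rw [norm_smul, hx1, mul_one]
      · intro i
        exact hx (σ i)
      · intro k i
        rw [inner_self_eq_norm_sq_to_K, norm_smul, hx1, mul_one]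
        rfl
    simpa using this
  have hlim2 : Tendsto v atTop (𝓝 0) := by
    have := ((↑u⁻¹ : symSubspace tp →L[ℂ] symSubspace tp).continuous.tendsto 0).comp hlim
    rw [map_zero] at this
    refine this.congr fun k => ?_
    rw [Function.comp, ← mul_apply_eq_comp, Units.inv_mul]; rfl
  have h3 := hlim2.norm
  rw [norm_zero] at h3
  have := ge_of_tendsto' h3 hv
  linarith

theorem symSubspace_invariant (tp : TensorPowerStructure H Hn n)
    (T : H →L[ℂ] H) (Tn : Hn →L[ℂ] Hn) (hTn : IsTensorPowerOp tp T Tn) {x : Hn}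
    (hx : x ∈ symSubspace tp) : Tn x ∈ symSubspace tp := by
  have : symSubspace tp ≤ (symSubspace tp).comap (Tn : Hn →ₗ[ℂ] Hn) := by
    apply Submodule.topologicalClosure_minimal
    · rw [Submodule.span_le]
      rintro _ ⟨x, rfl⟩
      have : Tn (∑ σ : Equiv.Perm (Fin n), tp.emb (x ∘ σ)) = symVec tp (fun i => T (x i)) := by
        rw [map_sum]
        exact Finset.sum_congr rfl fun σ _ => hTn _
      change Tn _ ∈ symSubspace tp
      rw [this]
      exact symVec_mem _ _
    · exact (Submodule.isClosed_topologicalClosure _).preimage Tn.continuous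
  exact this hx

theorem isTensorPowerOp_adjoint [CompleteSpace H] [CompleteSpace Hn]
    (tp : TensorPowerStructure H Hn n)
    (T : H →L[ℂ] H) (Tn : Hn →L[ℂ] Hn) (hTn : IsTensorPowerOp tp T Tn) :
    IsTensorPowerOp tp (ContinuousLinearMap.adjoint T) (ContinuousLinearMap.adjoint Tn) := by
  intro x
  apply tp_ext tp
  intro y
  rw [ContinuousLinearMap.adjoint_inner_right, hTn]
  simp only [tp.inner_emb, ContinuousLinearMap.adjoint_inner_right]

theorem sym_spectrum_subset [CompleteSpace H] [CompleteSpace Hn]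
    (tp : TensorPowerStructure H Hn n)
    (T : H →L[ℂ] H) (Tn : Hn →L[ℂ] Hn) (hTn : IsTensorPowerOp tp T Tn)
    [CompleteSpace (symSubspace tp)]
    (Ts : ↥(symSubspace tp) →L[ℂ] ↥(symSubspace tp))
    (hTs : ∀ x : symSubspace tp, ((Ts x : Hn)) = Tn x) :
    spectrum ℂ Ts ⊆ spectrum ℂ Tn := by
  intro z hz
  rw [spectrum.mem_iff] at hz ⊢
  intro h
  apply hz
  rw [ContinuousLinearMap.isUnit_iff_bijective] at h ⊢
  have e1 : ∀ w, (algebraMap ℂ (Hn →L[ℂ] Hn) z - Tn) w = z • w - Tn w := by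
    intro w; simp [Algebra.algebraMap_eq_smul_one]
  have e2 : ∀ w, (algebraMap ℂ (symSubspace tp →L[ℂ] symSubspace tp) z - Ts) w
      = z • w - Ts w := by
    intro w; simp [Algebra.algebraMap_eq_smul_one]
  constructor
  · intro a b hab
    apply Subtype.ext
    apply h.1
    rw [e2, e2] at hab
    have := congrArg Subtype.val hab
    simp only [Submodule.coe_sub, Submodule.coe_smul, hTs] at this
    rw [e1, e1]
    exact this
  · intro y
    obtain ⟨w, hw⟩ := h.2 (y : Hn)
    rw [e1] at hw
    obtain ⟨p, hp, q, hq, rfl⟩ := (symSubspace tp).exists_add_mem_mem_orthogonal w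
    refine ⟨⟨p, hp⟩, ?_⟩
    rw [e2]
    apply Subtype.ext
    simp only [Submodule.coe_sub, Submodule.coe_smul, hTs]
    have hTq : Tn q ∈ (symSubspace tp)ᗮ := by
      rw [Submodule.mem_orthogonal]
      intro s hs
      rw [← ContinuousLinearMap.adjoint_inner_left]
      exact (Submodule.mem_orthogonal _ _).1 hq _
        (symSubspace_invariant tp _ _ (isTensorPowerOp_adjoint tp T Tn hTn) hs)
    have hTp := symSubspace_invariant tp T Tn hTn hp
    have hd : z • p - Tn p - y = -(z • q - Tn q) := by
      rw [← hw, map_add, smul_add]; abel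
    have m1 : z • p - Tn p - y ∈ symSubspace tp :=
      Submodule.sub_mem _ (Submodule.sub_mem _ (Submodule.smul_mem _ _ hp) hTp) y.2
    have m2 : z • p - Tn p - y ∈ (symSubspace tp)ᗮ := by
      rw [hd]
      exact Submodule.neg_mem _ (Submodule.sub_mem _ (Submodule.smul_mem _ _ hq) hTq)
    have := (Submodule.mem_orthogonal _ _).1 m2 _ m1
    rw [inner_self_eq_zero] at this
    exact sub_eq_zero.1 this
end sym

/-- The spectrum of the restriction `T^{⊙n}` of `T^{⊗n}` to the symmetric
subspace `H^{⊙n}` coincides with `σ(T^{⊗n})`, and both equal the set of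
products `λ₁ ⋯ λₙ` with `λⱼ ∈ σ(T)`. -/
theorem spectrum_symTensorPow_eq_spectrum_tensorPow
    {H Hn : Type*} [NormedAddCommGroup H] [InnerProductSpace ℂ H] [CompleteSpace H]
    [Nontrivial H]
    [NormedAddCommGroup Hn] [InnerProductSpace ℂ Hn] [CompleteSpace Hn]
    {n : ℕ} (tp : TensorPowerStructure H Hn n)
    (T : H →L[ℂ] H) (Tn : Hn →L[ℂ] Hn) (hTn : IsTensorPowerOp tp T Tn)
    (Ts : ↥(symSubspace tp) →L[ℂ] ↥(symSubspace tp))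
    (hTs : ∀ x : symSubspace tp, ((Ts x : Hn)) = Tn x) :
    spectrum ℂ Ts = spectrum ℂ Tn ∧
      spectrum ℂ Tn =
        {z : ℂ | ∃ l : Fin n → ℂ, (∀ j, l j ∈ spectrum ℂ T) ∧ z = ∏ j, l j} := by
  have hcs : CompleteSpace (symSubspace tp) :=
    (Submodule.isClosed_topologicalClosure _).completeSpace_coe
  have h1 : spectrum ℂ Ts ⊆ spectrum ℂ Tn := sym_spectrum_subset tp T Tn hTn Ts hTs
  have h2 : spectrum ℂ Tn ⊆
      {z : ℂ | ∃ l : Fin n → ℂ, (∀ j, l j ∈ spectrum ℂ T) ∧ z = ∏ j, l j} :=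
    fun z hz => tp_spectrum_subset tp T Tn hTn hz
  have h3 : {z : ℂ | ∃ l : Fin n → ℂ, (∀ j, l j ∈ spectrum ℂ T) ∧ z = ∏ j, l j} ⊆
      spectrum ℂ Ts := by
    rintro z ⟨l, hl, rfl⟩
    obtain ⟨m, hm, hor⟩ := exists_good_tuple T l hl
    rw [← hm]
    rcases hor with hor | hor
    · exact prod_mem_spectrum_of_approx tp T Tn hTn Ts hTs m hor
    · have hadj := isTensorPowerOp_adjoint tp T Tn hTn
      have := prod_mem_spectrum_of_approx tp _ _ hadj (ContinuousLinearMap.adjoint Ts) (by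
        intro x
        have hmem := symSubspace_invariant tp _ _ hadj x.2
        have : ContinuousLinearMap.adjoint Ts x = ⟨ContinuousLinearMap.adjoint Tn x, hmem⟩ := by
          apply ext_inner_right ℂ
          intro y
          rw [ContinuousLinearMap.adjoint_inner_left, Submodule.coe_inner, Submodule.coe_inner, hTs,
            ContinuousLinearMap.adjoint_inner_left]
        rw [this]) (fun j => star (m j)) hor
      rw [← star_prod] at this
      exact star_mem_spectrum_adjoint.1 this
  exact ⟨h1.antisymm (h2.trans h3), h2.antisymm (h3.trans h1)⟩
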